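/- arXiv:1609.02473 — 3 statements merged into one kernel-verified Lean document; each statement's English description precedes it below -/
import Mathlib

section
/- Let p > 0 be a real number, c a real constant, and U : ℝ → ℝ a twice continuously differentiable positive function satisfying (1/2) p U^{p−1} (U^2 − U'^2) + (U^p − c)(U − U'') = 0 on ℝ, together with the asymptotic conditions U(z) → 0 and U'(z) → 0 as z → +∞. Then (U^p − c)(U^2 − U'^2) = 0 holds at every z ∈ ℝ. -/
open Real Filter

theorem second_integral_vanishes (p : ℝ) (hp : 0 < p) (c : ℝ)
    (U : ℝ → ℝ) (hU : ContDiff ℝ 2 U) (hUpos : ∀ z : ℝ, 0 < U z)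
    (hODE : ∀ z : ℝ,
      (1/2) * p * U z ^ (p-1) * ((U z)^2 - (deriv U z)^2)
      + (U z ^ p - c) * (U z - deriv (deriv U) z) = 0)
    (hU0 : Tendsto U atTop (nhds 0))
    (hU1 : Tendsto (deriv U) atTop (nhds 0)) :
    ∀ z : ℝ, (U z ^ p - c) * ((U z)^2 - (deriv U z)^2) = 0 := by
  have h1 : ∀ z, HasDerivAt U (deriv U z) z := fun z =>
    (hU.differentiable (by norm_num) z).hasDerivAt
  have hU' : ContDiff ℝ 1 (deriv U) := by
    have h : ContDiff ℝ (1 + 1) U := by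
      rw [one_add_one_eq_two]
      exact hU
    exact (contDiff_succ_iff_deriv.1 h).2.2
  have h2 : ∀ z, HasDerivAt (deriv U) (deriv (deriv U) z) z := fun z =>
    (hU'.differentiable (by norm_num) z).hasDerivAt
  have hF : ∀ z, HasDerivAt (fun z => (U z ^ p - c) * ((U z)^2 - (deriv U z)^2)) 0 z := by
    intro z
    have ha := ((h1 z).rpow_const (p := p) (Or.inl (hUpos z).ne')).sub_const c
    have hb := ((h1 z).pow 2).sub ((h2 z).pow 2)
    refine (ha.mul hb).congr_deriv ?_
    have h := hODE z
    simp only [Pi.sub_apply, Pi.pow_apply]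
    push_cast
    linear_combination (2 * deriv U z) * h
  have hlim : Tendsto (fun z => (U z ^ p - c) * ((U z)^2 - (deriv U z)^2)) atTop (nhds 0) := by
    have ha : Tendsto (fun z => U z ^ p) atTop (nhds ((0:ℝ) ^ p)) :=
      hU0.rpow_const (Or.inr hp.le)
    have h := (ha.sub_const c).mul ((hU0.pow 2).sub (hU1.pow 2))
    simpa using h
  intro z
  have hconst := fun w => is_const_of_deriv_eq_zero (fun x => (hF x).differentiableAt)
    (fun x => (hF x).deriv) w z
  exact tendsto_nhds_unique (tendsto_const_nhds.congr fun w => (hconst w).symm) hlim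
end

section
/- Let p > 0 be a real number, c a real constant, a > 0, and define U(z) = a·e^{−|z|} and V(z) = −a·sgn(z)·e^{−|z|} (with sgn(0) = 0). Then the integral ∫_{−∞}^{+∞} [ −c(φ U + φ' V) + (1/2) p φ U^{p−1}(U^2 − V^2) + φ U^{p+1} + V·(φ' U^p + p φ U^{p−1} V) ] dz vanishes for every smooth compactly supported test function φ : ℝ → ℝ if and only if a^p = c. -/
open Real MeasureTheory

/-- The peakon profile antiderivative, `s = 1` on the right half line, `s = -1` on the left. -/
lemma peakon_aux_hasDeriv (φ : ℝ → ℝ) (hφ : ContDiff ℝ (⊤ : ℕ∞) φ) (A B p s z : ℝ) :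
    HasDerivAt (fun z => φ z * (A * Real.exp (-(s * z)) - B * Real.exp (-(s * z) * (p + 1))))
      (deriv φ z * (A * Real.exp (-(s * z)) - B * Real.exp (-(s * z) * (p + 1)))
        + φ z * (A * (Real.exp (-(s * z)) * (-s))
          - B * (Real.exp (-(s * z) * (p + 1)) * (-s * (p + 1))))) z := by
  have h1 : HasDerivAt φ (deriv φ z) z :=
    (hφ.differentiable (by simp)).differentiableAt.hasDerivAt
  have h2 : HasDerivAt (fun z : ℝ => -(s * z)) (-s) z := by
    have h := (hasDerivAt_id z).const_mul (-s)
    simpa using h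
  exact h1.mul ((h2.exp.const_mul A).sub ((h2.mul_const (p + 1)).exp.const_mul B))

lemma peakon_integral (p : ℝ) (c : ℝ)
    (a : ℝ) (ha : 0 < a)
    (U V : ℝ → ℝ)
    (hU : ∀ z : ℝ, U z = a * Real.exp (-|z|))
    (hV : ∀ z : ℝ, V z = -a * Real.sign z * Real.exp (-|z|))
    (φ : ℝ → ℝ) (hφ : ContDiff ℝ (⊤ : ℕ∞) φ) (hc : HasCompactSupport φ) :
      ∫ z : ℝ,
        (-c * (φ z * U z + deriv φ z * V z)
          + (1/2) * p * φ z * U z ^ (p-1) * ((U z)^2 - (V z)^2)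
          + φ z * U z ^ (p+1)
          + V z * (deriv φ z * U z ^ p + p * φ z * U z ^ (p-1) * V z))
      = -2 * (φ 0 * (c * a - a ^ (p + 1))) := by
  set f : ℝ → ℝ := fun z => (-c * (φ z * U z + deriv φ z * V z)
          + (1/2) * p * φ z * U z ^ (p-1) * ((U z)^2 - (V z)^2)
          + φ z * U z ^ (p+1)
          + V z * (deriv φ z * U z ^ p + p * φ z * U z ^ (p-1) * V z)) with hf
  set G : ℝ → ℝ → ℝ := fun s z =>
    φ z * (c * a * Real.exp (-(s * z)) - a ^ (p + 1) * Real.exp (-(s * z) * (p + 1))) with hG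
  have hGc : ∀ s, ContDiff ℝ 1 (G s) := by
    intro s
    have : ContDiff ℝ 1 φ := hφ.of_le (by exact_mod_cast le_top)
    simp only [hG]
    fun_prop
  have hGs : ∀ s, HasCompactSupport (G s) := fun s => hc.mul_right
  have hG0 : ∀ s, G s 0 = φ 0 * (c * a - a ^ (p + 1)) := by intro s; simp [hG]
  have hGi : ∀ s, Integrable (deriv (G s)) := fun s =>
    ((hGc s).continuous_deriv le_rfl).integrable_of_hasCompactSupport (hGs s).deriv
  have hder : ∀ s z, deriv (G s) z = _ := fun s z =>
    (peakon_aux_hasDeriv φ hφ (c * a) (a ^ (p + 1)) p s z).deriv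
  have hUp : ∀ z, 0 < U z := fun z => by rw [hU]; positivity
  have e1 : ∀ z, U z ^ p = U z ^ (p - 1) * U z := fun z => by
    rw [← Real.rpow_add_one (hUp z).ne']; congr 1; ring
  have e2 : ∀ z, U z ^ (p + 1) = U z ^ (p - 1) * U z * U z := fun z => by
    rw [Real.rpow_add_one (hUp z).ne', e1]
  have e3 : ∀ z, U z ^ (p + 1) = a ^ (p + 1) * Real.exp (-|z| * (p + 1)) := fun z => by
    rw [hU, Real.mul_rpow ha.le (Real.exp_pos _).le, Real.exp_mul]
  have hpos : Set.EqOn (deriv (G 1)) f (Set.Ioi 0) := by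
    intro z hz
    have hz' : 0 < z := hz
    have hVU : V z = - U z := by rw [hV, hU, Real.sign_of_pos hz']; ring
    have hu := hU z
    have h3 := e3 z
    rw [abs_of_pos hz'] at hu h3
    rw [hder]
    simp only [hf, one_mul, hVU]
    have h4 := e2 z
    rw [e1]
    linear_combination (-φ z * (-c) - deriv φ z * c) * hu + (deriv φ z - φ z * (p + 1)) * h3
      + (p * φ z - deriv φ z ) * h4
  have hneg : Set.EqOn (fun z => - deriv (G (-1)) z) f (Set.Iio 0) := by
    intro z hz
    have hz' : z < 0 := hz
    have hVU : V z = U z := by rw [hV, hU, Real.sign_of_neg hz']; ring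
    have hu := hU z
    have h3 := e3 z
    rw [abs_of_neg hz', neg_neg] at hu h3
    simp only
    rw [hder]
    simp only [hf, neg_mul, one_mul, neg_neg, hVU]
    have h4 := e2 z
    rw [e1]
    linear_combination (φ z * c + deriv φ z * c) * hu + (-deriv φ z - φ z * (p + 1)) * h3
      + (p * φ z + deriv φ z) * h4
  have i1 : IntegrableOn f (Set.Ioi 0) :=
    ((hGi 1).integrableOn).congr_fun hpos measurableSet_Ioi
  have i2 : IntegrableOn f (Set.Iio 0) :=
    ((hGi (-1)).neg.integrableOn).congr_fun hneg measurableSet_Iio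
  have i2' : IntegrableOn f (Set.Iic 0) := by
    rw [integrableOn_Iic_iff_integrableOn_Iio]
    exact i2
  rw [← intervalIntegral.integral_Iic_add_Ioi i2' i1, integral_Iic_eq_integral_Iio,
    ← setIntegral_congr_fun measurableSet_Ioi hpos,
    ← setIntegral_congr_fun measurableSet_Iio hneg, integral_neg,
    ← integral_Iic_eq_integral_Iio, (hGs _).integral_Iic_deriv_eq (hGc _),
    (hGs _).integral_Ioi_deriv_eq (hGc _), hG0, hG0]
  ring

theorem peakon_weak_solution_iff (p : ℝ) (hp : 0 < p) (c : ℝ)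
    (a : ℝ) (ha : 0 < a)
    (U V : ℝ → ℝ)
    (hU : ∀ z : ℝ, U z = a * Real.exp (-|z|))
    (hV : ∀ z : ℝ, V z = -a * Real.sign z * Real.exp (-|z|)) :
    (∀ φ : ℝ → ℝ, ContDiff ℝ (⊤ : ℕ∞) φ → HasCompactSupport φ →
      ∫ z : ℝ,
        (-c * (φ z * U z + deriv φ z * V z)
          + (1/2) * p * φ z * U z ^ (p-1) * ((U z)^2 - (V z)^2)
          + φ z * U z ^ (p+1)
          + V z * (deriv φ z * U z ^ p + p * φ z * U z ^ (p-1) * V z)) = 0)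
    ↔ a ^ p = c := by
  have ea : a ^ (p + 1) = a ^ p * a := Real.rpow_add_one ha.ne' p
  constructor
  · intro h
    let b : ContDiffBump (0 : ℝ) := ⟨1, 2, by norm_num, by norm_num⟩
    have h1 := h b b.contDiff b.hasCompactSupport
    rw [peakon_integral p c a ha U V hU hV b b.contDiff b.hasCompactSupport] at h1
    have hb : b 0 = 1 := b.one_of_mem_closedBall (by simp [b])
    rw [hb, ea] at h1
    have h2 : (a ^ p - c) * a = 0 := by linarith
    rcases mul_eq_zero.1 h2 with h3 | h3
    · linarith
    · exact absurd h3 ha.ne'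
  · intro h φ hφ hc
    rw [peakon_integral p c a ha U V hU hV φ hφ hc, ea, h]
    ring
end

section
/- Let p > 0 be a real number and a > 0, and define U(z) = a·e^{−|z|} and V(z) = −a·sgn(z)·e^{−|z|} (with sgn(0) = 0). Then U is NOT a weak solution of the similarity ODE: there exists a smooth compactly supported test function φ : ℝ → ℝ such that ∫_{−∞}^{+∞} [ p^{−1}(φ U + φ' V) + (1/2) p φ' U^{p−1}(U^2 − V^2) + φ' U^{p+1} + (φ'' U^p + p φ' U^{p−1} V)·V ] dz ≠ 0. Hence the weak form of the similarity ODE admits no peakon solutions with a > 0. -/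
open Real MeasureTheory

noncomputable def peakG (p a s : ℝ) (φ : ℝ → ℝ) (z : ℝ) : ℝ :=
  -s * (p⁻¹ * (φ z * (a * exp (-s * z)))
    + deriv φ z * (a ^ p * a * exp (-s * (p + 1) * z)))

lemma peakG_contDiff (p a s : ℝ) (φ : ℝ → ℝ) (h : ContDiff ℝ (⊤ : ℕ∞) φ) :
    ContDiff ℝ 1 (peakG p a s φ) := by
  have h1 : ContDiff ℝ 1 φ := h.of_le (by exact_mod_cast le_top)
  have h2 : ContDiff ℝ 1 (deriv φ) := by
    exact (contDiff_infty_iff_deriv.1 h).2.of_le (by exact_mod_cast le_top)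
  unfold peakG
  fun_prop

lemma peakG_supp (p a s : ℝ) (φ : ℝ → ℝ) (h : HasCompactSupport φ) :
    HasCompactSupport (peakG p a s φ) := by
  have h1 := h.deriv
  have e : peakG p a s φ = (fun z => -s * p⁻¹ * a * exp (-s * z)) * φ
      + (fun z => -s * (a ^ p * a * exp (-s * (p + 1) * z))) * deriv φ := by
    ext z
    simp only [peakG, Pi.add_apply, Pi.mul_apply]
    ring
  rw [e]
  exact h.mul_left.add h1.mul_left

lemma peakG_deriv (p a s : ℝ) (hs : s ^ 2 = 1) (hp : 0 < p) (ha : 0 < a) (φ : ℝ → ℝ)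
    (h : ContDiff ℝ (⊤ : ℕ∞) φ) (z u v : ℝ) (hu : u = a * exp (-s * z)) (hv : v = -s * u) :
    (p⁻¹ * (φ z * u + deriv φ z * v)
          + (1/2) * p * deriv φ z * u ^ (p-1) * (u^2 - v^2)
          + deriv φ z * u ^ (p+1)
          + (deriv (deriv φ) z * u ^ p + p * deriv φ z * u ^ (p-1) * v) * v)
      = deriv (peakG p a s φ) z := by
  have hup : 0 < u := by rw [hu]; positivity
  have d1 : HasDerivAt φ (deriv φ z) z := (h.differentiable (by simp) z).hasDerivAt
  have d2 : HasDerivAt (deriv φ) (deriv (deriv φ) z) z := by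
    exact ((contDiff_infty_iff_deriv.1 h).2.differentiable (by simp) z).hasDerivAt
  have e1 : HasDerivAt (fun z => exp (-s * z)) (exp (-s * z) * (-s * 1)) z :=
    ((hasDerivAt_id z).const_mul (-s)).exp
  have e2 : HasDerivAt (fun z => exp (-s * (p + 1) * z))
      (exp (-s * (p + 1) * z) * (-s * (p + 1) * 1)) z :=
    ((hasDerivAt_id z).const_mul (-s * (p + 1))).exp
  have D : HasDerivAt (peakG p a s φ) _ z :=
    (((d1.mul (e1.const_mul a)).const_mul p⁻¹).add
      (d2.mul (e2.const_mul (a ^ p * a)))).const_mul (-s)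
  rw [D.deriv]
  have w : a ^ p * a * exp (-s * (p + 1) * z) = u ^ p * u := by
    rw [hu, mul_rpow ha.le (exp_pos _).le, ← exp_mul,
      show -s * (p + 1) * z = -s * z * p + -s * z by ring, exp_add]
    ring
  rw [show a ^ p * a * (exp (-s * (p + 1) * z) * (-s * (p + 1) * 1))
    = u ^ p * u * (-s * (p + 1)) by rw [← w]; ring, w,
    show a * (exp (-s * z) * (-s * 1)) = u * (-s) by rw [hu]; ring, ← hu,
    rpow_add_one hup.ne', rpow_sub_one hup.ne', hv]
  have hs' : (-s * u) ^ 2 = u ^ 2 := by rw [mul_pow, neg_sq, hs, one_mul]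
  rw [hs']
  field_simp
  linear_combination (-2 * φ z - 2 * p * deriv φ z * u ^ p) * hs

theorem peakon_not_weak_solution_of_similarity_ODE (p : ℝ) (hp : 0 < p)
    (a : ℝ) (ha : 0 < a)
    (U V : ℝ → ℝ)
    (hU : ∀ z : ℝ, U z = a * Real.exp (-|z|))
    (hV : ∀ z : ℝ, V z = -a * Real.sign z * Real.exp (-|z|)) :
    ∃ φ : ℝ → ℝ, ContDiff ℝ (⊤ : ℕ∞) φ ∧ HasCompactSupport φ ∧
      ∫ z : ℝ,
        (p⁻¹ * (φ z * U z + deriv φ z * V z)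
          + (1/2) * p * deriv φ z * U z ^ (p-1) * ((U z)^2 - (V z)^2)
          + deriv φ z * U z ^ (p+1)
          + (deriv (deriv φ) z * U z ^ p + p * deriv φ z * U z ^ (p-1) * V z) * V z) ≠ 0 := by
  let b : ContDiffBump (0 : ℝ) := ⟨1, 2, one_pos, one_lt_two⟩
  obtain ⟨φ, hφ, hc, h0, h0'⟩ : ∃ φ : ℝ → ℝ, ContDiff ℝ (⊤ : ℕ∞) φ ∧ HasCompactSupport φ ∧
      φ 0 = 1 ∧ deriv φ 0 = 0 := by
    refine ⟨b, b.contDiff, b.hasCompactSupport, b.eventuallyEq_one.eq_of_nhds, ?_⟩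
    rw [b.eventuallyEq_one.deriv_eq]
    exact deriv_const 0 1
  refine ⟨φ, hφ, hc, ?_⟩
  set f : ℝ → ℝ := fun z => (p⁻¹ * (φ z * U z + deriv φ z * V z)
          + (1/2) * p * deriv φ z * U z ^ (p-1) * ((U z)^2 - (V z)^2)
          + deriv φ z * U z ^ (p+1)
          + (deriv (deriv φ) z * U z ^ p + p * deriv φ z * U z ^ (p-1) * V z) * V z) with hf
  have int : ∀ s, Integrable (deriv (peakG p a s φ)) := fun s =>
    ((peakG_contDiff p a s φ hφ).continuous_deriv le_rfl).integrable_of_hasCompactSupport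
      (peakG_supp p a s φ hc).deriv
  have hR : Set.EqOn f (deriv (peakG p a 1 φ)) (Set.Ioi 0) := by
    intro z hz
    have hz : 0 < z := hz
    refine peakG_deriv p a 1 (by norm_num) hp ha φ hφ z (U z) (V z) ?_ ?_
    · rw [hU, abs_of_pos hz]; simp
    · rw [hU, hV, Real.sign_of_pos hz]; ring
  have hL : Set.EqOn f (deriv (peakG p a (-1) φ)) (Set.Iio 0) := by
    intro z hz
    have hz : z < 0 := hz
    refine peakG_deriv p a (-1) (by norm_num) hp ha φ hφ z (U z) (V z) ?_ ?_
    · rw [hU, abs_of_neg hz]; simp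
    · rw [hU, hV, Real.sign_of_neg hz]; ring
  have iR : IntegrableOn f (Set.Ioi 0) :=
    (int 1).integrableOn.congr_fun hR.symm measurableSet_Ioi
  have iL : IntegrableOn f (Set.Iic 0) := by
    rw [integrableOn_Iic_iff_integrableOn_Iio]
    exact (int (-1)).integrableOn.congr_fun hL.symm measurableSet_Iio
  rw [← intervalIntegral.integral_Iic_add_Ioi iL iR, integral_Iic_eq_integral_Iio,
    setIntegral_congr_fun measurableSet_Iio hL, setIntegral_congr_fun measurableSet_Ioi hR,
    ← integral_Iic_eq_integral_Iio,
    (peakG_supp p a _ φ hc).integral_Iic_deriv_eq (peakG_contDiff p a _ φ hφ),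
    (peakG_supp p a _ φ hc).integral_Ioi_deriv_eq (peakG_contDiff p a _ φ hφ)]
  simp only [peakG, h0, h0']
  have key : 0 < p⁻¹ * a := by positivity
  simp only [mul_zero, exp_zero, zero_mul, mul_one, one_mul, add_zero]
  intro hh
  linarith
end
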